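/- arXiv:1909.05807 — 11 statements merged into one kernel-verified Lean document; each statement's English description precedes it below -/
import Mathlib

section
/- Let X be a nonempty set and x₀ ∈ X. Let F be the free group on the set X \ {x₀}, regarded as a heap with operation [g,h,k] = g h⁻¹ k, and let ι : X → F send x₀ to the identity element and each y ≠ x₀ to the corresponding generator of F. Then (F, ι) is the free heap on X: for every heap H and every function φ : X → H there exists a unique map ψ : F → H satisfying ψ(g h⁻¹ k) = [ψ(g), ψ(h), ψ(k)] for all g,h,k ∈ F and ψ ∘ ι = φ. -/
/-- A ternary operation is a heap operation if it is associative and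
satisfies the Mal'cev identities. -/
def IsHeap {H : Type*} (op : H → H → H → H) : Prop :=
  (∀ a b c d e : H, op (op a b c) d e = op a b (op c d e)) ∧
  (∀ a b : H, op a b b = a) ∧ (∀ a b : H, op b b a = a)

/-- Let `X` be a nonempty set and `x₀ ∈ X`.  Let `F` be the
free group on `X \ {x₀}`, regarded as a heap with `[g,h,k] = g h⁻¹ k`, and let
`ι : X → F` send `x₀` to the identity and each `y ≠ x₀` to the corresponding
generator.  Then `(F, ι)` is the free heap on `X`: for every heap `H` and every
function `φ : X → H` there is a unique map `ψ : F → H` preserving the heap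
operation with `ψ ∘ ι = φ`. -/
theorem free_heap_is_heap_of_free_group {X : Type} [DecidableEq X] (x₀ : X)
    (H : Type) (op : H → H → H → H) (hH : IsHeap op) (φ : X → H) :
    ∃! ψ : FreeGroup {y : X // y ≠ x₀} → H,
      (∀ g h k : FreeGroup {y : X // y ≠ x₀},
        ψ (g * h⁻¹ * k) = op (ψ g) (ψ h) (ψ k)) ∧
      (∀ x : X, ψ (if h : x = x₀ then 1 else FreeGroup.of ⟨x, h⟩) = φ x) := by
  obtain ⟨assoc, hr, hl⟩ := hH
  let e : H := φ x₀
  letI G : Group H :=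
    @Group.ofLeftAxioms H ⟨fun a b => op a e b⟩ ⟨fun a => op e a e⟩ ⟨e⟩
      (fun a b c => assoc a e b e c)
      (fun a => hl a e)
      (fun a => by
        change op (op e a e) e a = e
        rw [assoc, hl, hr])
  have hmul : ∀ a b : H, a * b = op a e b := fun _ _ => rfl
  have hinv : ∀ a : H, a⁻¹ = op e a e := fun _ => rfl
  have hone : (1 : H) = φ x₀ := rfl
  have hop : ∀ a b c : H, a * b⁻¹ * c = op a b c := by
    intro a b c
    rw [hmul, hmul, hinv, ← assoc a e e b e, hr, assoc, hl]
  let f : FreeGroup {y : X // y ≠ x₀} →* H := FreeGroup.lift (fun y => φ y.1)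
  refine ⟨f, ⟨fun g h k => ?_, fun x => ?_⟩, ?_⟩
  · rw [map_mul, map_mul, map_inv, hop]
  · by_cases h : x = x₀
    · subst h
      simp [hone]
    · simp [h, f]
  · rintro ψ ⟨h1, h2⟩
    have hψ1 : ψ 1 = 1 := by
      have := h2 x₀
      simpa [hone] using this
    let p : FreeGroup {y : X // y ≠ x₀} →* H := MonoidHom.mk' ψ (fun a b => by
      have := h1 a 1 b
      rw [hψ1, ← hop] at this
      simpa using this)
    have : p = f := by
      ext y
      have := h2 y.1
      rw [dif_neg y.2] at this
      simpa [p, f] using this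
    rw [← this]
    rfl
end

section
/- Let F be a free group and let S be a nonempty subset of F closed under the operation (s,t,u) ↦ s t⁻¹ u, and let e ∈ S. Then the group G(S;e), namely S with product s · t = s e⁻¹ t, neutral element e and inverse s⁻¹ = e s⁻¹ e, is a free group. -/
/-- Let `F` be a free group and `S ⊆ F` a nonempty subset
closed under `(s,t,u) ↦ s t⁻¹ u` (i.e. a sub-heap of the heap associated to
`F`), and let `e ∈ S`.  Then the retract group `G(S;e)`, namely `S` with the
product `s · t = s e⁻¹ t`, is a free group. -/
theorem subheap_retract_of_free_group_is_free {α : Type} (S : Set (FreeGroup α))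
    (hne : S.Nonempty)
    (hcl : ∀ s ∈ S, ∀ t ∈ S, ∀ u ∈ S, s * t⁻¹ * u ∈ S)
    (e : FreeGroup α) (he : e ∈ S) :
    ∃ (β : Type) (φ : S → FreeGroup β), Function.Bijective φ ∧
      ∀ (s t : S) (h : (s : FreeGroup α) * e⁻¹ * (t : FreeGroup α) ∈ S),
        φ ⟨(s : FreeGroup α) * e⁻¹ * (t : FreeGroup α), h⟩ = φ s * φ t := by
  let H : Subgroup (FreeGroup α) :=
    { carrier := {g | g * e ∈ S}
      mul_mem' := by
        intro a b ha hb
        have h := hcl _ ha _ he _ hb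
        have h2 : a * e * e⁻¹ * (b * e) = a * b * e := by group
        rw [h2] at h
        exact h
      one_mem' := by
        change 1 * e ∈ S
        rw [one_mul]
        exact he
      inv_mem' := by
        intro a ha
        have h := hcl _ he _ ha _ he
        have h2 : e * (a * e)⁻¹ * e = a⁻¹ * e := by group
        rw [h2] at h
        exact h }
  have hm : ∀ s : S, (s : FreeGroup α) * e⁻¹ ∈ H := by
    intro s
    change (s : FreeGroup α) * e⁻¹ * e ∈ S
    rw [inv_mul_cancel_right]
    exact s.2
  let ψ := IsFreeGroup.toFreeGroup H
  refine ⟨IsFreeGroup.Generators H, fun s => ψ ⟨(s : FreeGroup α) * e⁻¹, hm s⟩, ⟨?_, ?_⟩, ?_⟩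
  · intro s t hst
    have h := congrArg Subtype.val (ψ.injective hst)
    exact Subtype.ext (mul_right_cancel h)
  · intro y
    refine ⟨⟨(ψ.symm y : H) * e, (ψ.symm y).2⟩, ?_⟩
    simp only [mul_inv_cancel_right, Subtype.coe_eta, MulEquiv.apply_symm_apply]
  · intro s t h
    rw [← map_mul]
    apply congrArg ψ
    apply Subtype.ext
    simp only [Subgroup.coe_mul, mul_assoc]
end

section
/- Any two Abelian heaps A and B admit a coproduct in the category of Abelian heaps: there exist an Abelian heap C and heap morphisms ι_A : A → C and ι_B : B → C such that for every Abelian heap H and all heap morphisms φ : A → H and ψ : B → H there exists a unique heap morphism ξ : C → H with ξ ∘ ι_A = φ and ξ ∘ ι_B = ψ. -/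
/-- An Abelian heap is a heap whose ternary operation satisfies
`[a,b,c] = [c,b,a]`. -/
def IsAbelianHeap {H : Type*} (op : H → H → H → H) : Prop :=
  IsHeap op ∧ ∀ a b c : H, op a b c = op c b a

/-- Formal ternary terms on the disjoint union of `A` and `B`. -/
inductive HTerm (A B : Type) : Type
  | inA : A → HTerm A B
  | inB : B → HTerm A B
  | op : HTerm A B → HTerm A B → HTerm A B → HTerm A B

/-- The smallest congruence giving the coproduct. -/
inductive HRel {A B : Type} (opA : A → A → A → A) (opB : B → B → B → B) :
    HTerm A B → HTerm A B → Prop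
  | refl (x) : HRel opA opB x x
  | symm {x y} : HRel opA opB x y → HRel opA opB y x
  | trans {x y z} : HRel opA opB x y → HRel opA opB y z → HRel opA opB x z
  | congr {x y z x' y' z'} : HRel opA opB x x' → HRel opA opB y y' → HRel opA opB z z' →
      HRel opA opB (.op x y z) (.op x' y' z')
  | assoc (a b c d e) : HRel opA opB (.op (.op a b c) d e) (.op a b (.op c d e))
  | right (a b) : HRel opA opB (.op a b b) a
  | left (a b) : HRel opA opB (.op b b a) a
  | comm (a b c) : HRel opA opB (.op a b c) (.op c b a)
  | homA (a b c) : HRel opA opB (.inA (opA a b c)) (.op (.inA a) (.inA b) (.inA c))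
  | homB (a b c) : HRel opA opB (.inB (opB a b c)) (.op (.inB a) (.inB b) (.inB c))

/-- Evaluation of terms. -/
def HTerm.ev {A B H : Type} (opH : H → H → H → H) (φ : A → H) (ψ : B → H) : HTerm A B → H
  | .inA a => φ a
  | .inB b => ψ b
  | .op x y z => opH (x.ev opH φ ψ) (y.ev opH φ ψ) (z.ev opH φ ψ)

theorem HRel.ev_eq {A B H : Type} {opA : A → A → A → A} {opB : B → B → B → B}
    {opH : H → H → H → H} (hH : IsAbelianHeap opH) {φ : A → H} {ψ : B → H}
    (hφ : ∀ a b c : A, φ (opA a b c) = opH (φ a) (φ b) (φ c))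
    (hψ : ∀ a b c : B, ψ (opB a b c) = opH (ψ a) (ψ b) (ψ c))
    {x y : HTerm A B} (h : HRel opA opB x y) : x.ev opH φ ψ = y.ev opH φ ψ := by
  obtain ⟨⟨h1, h2, h3⟩, h4⟩ := hH
  induction h with
  | refl x => rfl
  | symm _ ih => exact ih.symm
  | trans _ _ ih1 ih2 => exact ih1.trans ih2
  | congr _ _ _ ih1 ih2 ih3 => simp only [HTerm.ev, ih1, ih2, ih3]
  | assoc a b c d e => exact h1 _ _ _ _ _
  | right a b => exact h2 _ _
  | left a b => exact h3 _ _
  | comm a b c => exact h4 _ _ _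
  | homA a b c => exact hφ _ _ _
  | homB a b c => exact hψ _ _ _

/-- The congruence as a setoid. -/
def hSetoid {A B : Type} (opA : A → A → A → A) (opB : B → B → B → B) : Setoid (HTerm A B) :=
  ⟨HRel opA opB, ⟨HRel.refl, HRel.symm, HRel.trans⟩⟩

/-- Any two Abelian heaps `A` and `B` admit a coproduct in the
category of Abelian heaps. -/
theorem abelian_heaps_have_coproducts {A B : Type} (opA : A → A → A → A)
    (hA : IsAbelianHeap opA) (opB : B → B → B → B) (hB : IsAbelianHeap opB) :
    ∃ (C : Type) (opC : C → C → C → C), IsAbelianHeap opC ∧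
      ∃ (ιA : A → C) (ιB : B → C),
        (∀ a b c : A, ιA (opA a b c) = opC (ιA a) (ιA b) (ιA c)) ∧
        (∀ a b c : B, ιB (opB a b c) = opC (ιB a) (ιB b) (ιB c)) ∧
        ∀ (H : Type) (opH : H → H → H → H), IsAbelianHeap opH →
          ∀ (φ : A → H) (ψ : B → H),
            (∀ a b c : A, φ (opA a b c) = opH (φ a) (φ b) (φ c)) →
            (∀ a b c : B, ψ (opB a b c) = opH (ψ a) (ψ b) (ψ c)) →
            ∃! ξ : C → H,
              (∀ x y z : C, ξ (opC x y z) = opH (ξ x) (ξ y) (ξ z)) ∧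
              (∀ a : A, ξ (ιA a) = φ a) ∧ (∀ b : B, ξ (ιB b) = ψ b) := by
  let S := hSetoid opA opB
  let m : HTerm A B → Quotient S := fun x => Quotient.mk S x
  let o : Quotient S → Quotient S → Quotient S → Quotient S :=
    fun x y z => m (.op x.out y.out z.out)
  have snd : ∀ {x y : HTerm A B}, HRel opA opB x y → m x = m y :=
    fun h => Quotient.sound (s := S) h
  have ho : ∀ x y z, o (m x) (m y) (m z) = m (.op x y z) := fun x y z =>
    snd (.congr (Quotient.mk_out (s := S) x) (Quotient.mk_out (s := S) y)
      (Quotient.mk_out (s := S) z))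
  have hm : ∀ q : Quotient S, ∃ x, m x = q := fun q => Quotient.exists_rep q
  refine ⟨Quotient S, o, ⟨⟨?_, ?_, ?_⟩, ?_⟩, fun a => m (.inA a), fun b => m (.inB b), ?_, ?_, ?_⟩
  · intro a b c d e
    obtain ⟨a, rfl⟩ := hm a
    obtain ⟨b, rfl⟩ := hm b
    obtain ⟨c, rfl⟩ := hm c
    obtain ⟨d, rfl⟩ := hm d
    obtain ⟨e, rfl⟩ := hm e
    rw [ho a b c, ho c d e, ho, ho]
    exact snd (.assoc _ _ _ _ _)
  · intro a b
    obtain ⟨a, rfl⟩ := hm a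
    obtain ⟨b, rfl⟩ := hm b
    rw [ho]
    exact snd (.right _ _)
  · intro a b
    obtain ⟨a, rfl⟩ := hm a
    obtain ⟨b, rfl⟩ := hm b
    rw [ho]
    exact snd (.left _ _)
  · intro a b c
    obtain ⟨a, rfl⟩ := hm a
    obtain ⟨b, rfl⟩ := hm b
    obtain ⟨c, rfl⟩ := hm c
    rw [ho, ho]
    exact snd (.comm _ _ _)
  · intro a b c
    rw [ho]
    exact snd (.homA _ _ _)
  · intro a b c
    rw [ho]
    exact snd (.homB _ _ _)
  · intro H opH hH φ ψ hφ hψ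
    refine ⟨Quotient.lift (HTerm.ev opH φ ψ) (fun x y h => HRel.ev_eq hH hφ hψ h),
      ⟨?_, fun _ => rfl, fun _ => rfl⟩, ?_⟩
    · intro x y z
      obtain ⟨x, rfl⟩ := hm x
      obtain ⟨y, rfl⟩ := hm y
      obtain ⟨z, rfl⟩ := hm z
      rw [ho]
      rfl
    · rintro ξ ⟨h1, h2, h3⟩
      funext q
      obtain ⟨x, rfl⟩ := hm q
      change ξ (m x) = x.ev opH φ ψ
      induction x with
      | inA a => exact h2 a
      | inB b => exact h3 b
      | op x y z ihx ihy ihz =>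
        rw [← ho, h1, ihx, ihy, ihz]
        rfl
end

section
/- Let A and B be Abelian heaps, e_A ∈ A, e_B ∈ B, and let (C, ι_A, ι_B) be a coproduct of A and B in the category of Abelian heaps. Then C is isomorphic as a heap to the heap H(G(A;e_A) × G(B;e_B) × ℤ) associated to the direct sum of the Abelian groups G(A;e_A), G(B;e_B) and ℤ. -/
theorem heap_group_aux {H : Type} (op : H → H → H → H) (h : IsAbelianHeap op) (e : H) :
    ∃ i : AddCommGroup H, (∀ x y z : H, op x y z = x - y + z) ∧ (0 : H) = e := by
  obtain ⟨⟨has, hr, hl⟩, hc⟩ := h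
  let ia : Add H := ⟨fun x y => op x e y⟩
  let iz : Zero H := ⟨e⟩
  let iN : Neg H := ⟨fun y => op e y e⟩
  let i : AddCommGroup H :=
    { add_assoc := fun a b c => has a e b e c
      zero_add := fun a => hl a e
      add_zero := fun a => hr a e
      nsmul := nsmulRec
      zsmul := zsmulRec
      neg_add_cancel := fun y => by
        change op (op e y e) e y = e
        rw [has, hl, hr]
      add_comm := fun a b => hc a e b }
  refine ⟨i, fun x y z => ?_, rfl⟩
  rw [sub_eq_add_neg]
  change op x y z = op (op x e (op e y e)) e z
  rw [← has x e e y e, hr, has, hl]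

theorem group_heap_aux {G : Type} [AddCommGroup G] :
    IsAbelianHeap (fun x y z : G => x - y + z) := by
  refine ⟨⟨?_, ?_, ?_⟩, ?_⟩ <;> intros <;> simp only [] <;> abel

/-- Let `A`, `B` be Abelian heaps, `e_A ∈ A`, `e_B ∈ B`, and
let `(C, ι_A, ι_B)` be a coproduct of `A` and `B` in the category of Abelian
heaps.  Then `C` is isomorphic as a heap to the heap associated to the direct
sum of the Abelian groups `G(A;e_A)`, `G(B;e_B)` and `ℤ`; on the product
`A × B × ℤ` that heap operation is `(p,q,r) ↦ p - q + r` computed componentwise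
in the retract groups (where `x + y = [x,e,y]` and `-y = [e,y,e]`) and in `ℤ`. -/
theorem coproduct_iso_heap_of_direct_sum {A B C : Type} (opA : A → A → A → A)
    (hA : IsAbelianHeap opA) (opB : B → B → B → B) (hB : IsAbelianHeap opB)
    (eA : A) (eB : B)
    (opC : C → C → C → C) (hC : IsAbelianHeap opC) (ιA : A → C) (ιB : B → C)
    (hιA : ∀ a b c : A, ιA (opA a b c) = opC (ιA a) (ιA b) (ιA c))
    (hιB : ∀ a b c : B, ιB (opB a b c) = opC (ιB a) (ιB b) (ιB c))
    (huniv : ∀ (H : Type) (opH : H → H → H → H), IsAbelianHeap opH →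
      ∀ (φ : A → H) (ψ : B → H),
        (∀ a b c : A, φ (opA a b c) = opH (φ a) (φ b) (φ c)) →
        (∀ a b c : B, ψ (opB a b c) = opH (ψ a) (ψ b) (ψ c)) →
        ∃! ξ : C → H,
          (∀ x y z : C, ξ (opC x y z) = opH (ξ x) (ξ y) (ξ z)) ∧
          (∀ a : A, ξ (ιA a) = φ a) ∧ (∀ b : B, ξ (ιB b) = ψ b)) :
    ∃ φ : C → A × B × ℤ, Function.Bijective φ ∧
      ∀ x y z : C, φ (opC x y z) =
        (opA (opA (φ x).1 eA (opA eA (φ y).1 eA)) eA (φ z).1,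
         opB (opB (φ x).2.1 eB (opB eB (φ y).2.1 eB)) eB (φ z).2.1,
         (φ x).2.2 - (φ y).2.2 + (φ z).2.2) := by
  obtain ⟨iA, oA, zA⟩ := heap_group_aux opA hA eA
  obtain ⟨iB, oB, zB⟩ := heap_group_aux opB hB eB
  obtain ⟨iC, oC, zC⟩ := heap_group_aux opC hC (ιA eA)
  subst zA
  subst zB
  simp only [oA, oB, oC] at *
  obtain ⟨φ, ⟨hφ, hφA, hφB⟩, -⟩ := huniv (A × B × ℤ) (fun x y z => x - y + z) group_heap_aux
    (fun a => (a, 0, 0)) (fun b => (0, b, 1)) (by intros; simp) (by intros; simp)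
  have hφ0 : φ 0 = 0 := by rw [zC, hφA]; rfl
  have hadd : ∀ x y, φ (x + y) = φ x + φ y := fun x y => by
    have := hφ x 0 y
    simpa [hφ0] using this
  have hAadd : ∀ x y, ιA (x + y) = ιA x + ιA y := fun x y => by
    have := hιA x 0 y
    simpa [← zC] using this
  let Φ : C →+ A × B × ℤ := ⟨⟨φ, hφ0⟩, hadd⟩
  let J : A →+ C := ⟨⟨ιA, zC.symm⟩, hAadd⟩
  let K : B →+ C := ⟨⟨fun b => ιB b - ιB 0, by simp⟩, fun x y => by
    have := hιB x 0 y
    simp only [sub_zero] at this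
    simp only [this]; abel⟩
  let g : A × B × ℤ → C := fun p => J p.1 + K p.2.1 + p.2.2 • ιB 0
  have hg : ∀ x y z, g (x - y + z) = g x - g y + g z := by
    intro x y z
    simp only [g, Prod.fst_add, Prod.fst_sub, Prod.snd_add, Prod.snd_sub, map_add, map_sub,
      add_smul, sub_smul]
    abel
  have hgφ : ∀ x, g (φ x) = x := by
    intro x
    have hu := (huniv C (fun x y z => x - y + z) group_heap_aux ιA ιB hιA hιB).unique
      (y₁ := fun x => g (φ x)) (y₂ := fun x => x)
      ⟨fun x y z => by simp only [hφ, hg], fun a => by simp [hφA, g, J],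
        fun b => by simp [hφB, g, K]⟩
      ⟨fun _ _ _ => rfl, fun _ => rfl, fun _ => rfl⟩
    exact congrFun hu x
  have hφg : ∀ p, φ (g p) = p := by
    rintro ⟨a, b, n⟩
    change Φ (J a + (ιB b - ιB 0) + n • ιB 0) = _
    have h1 : Φ (J a) = (a, 0, 0) := hφA a
    have h2 : ∀ b, Φ (ιB b) = (0, b, 1) := hφB
    rw [map_add, map_add, map_sub, map_zsmul, h1, h2, h2]
    simp
  refine ⟨φ, ⟨fun x y h => by rw [← hgφ x, h, hgφ], fun p => ⟨g p, hφg p⟩⟩, fun x y z => ?_⟩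
  rw [hφ]
  refine Prod.ext ?_ (Prod.ext ?_ ?_) <;> simp [sub_eq_add_neg]
end

section
/- If A and B are nonempty Abelian heaps and (C, ι_A, ι_B) is a coproduct of A and B in the category of Abelian heaps, then the underlying set of C is infinite. -/
/-- If `A` and `B` are nonempty Abelian heaps and
`(C, ι_A, ι_B)` is a coproduct of `A` and `B` in the category of Abelian heaps,
then the underlying set of `C` is infinite. -/
theorem coproduct_of_nonempty_abelian_heaps_infinite {A B C : Type}
    (opA : A → A → A → A) (hA : IsAbelianHeap opA)
    (opB : B → B → B → B) (hB : IsAbelianHeap opB)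
    (hneA : Nonempty A) (hneB : Nonempty B)
    (opC : C → C → C → C) (hC : IsAbelianHeap opC) (ιA : A → C) (ιB : B → C)
    (hιA : ∀ a b c : A, ιA (opA a b c) = opC (ιA a) (ιA b) (ιA c))
    (hιB : ∀ a b c : B, ιB (opB a b c) = opC (ιB a) (ιB b) (ιB c))
    (huniv : ∀ (H : Type) (opH : H → H → H → H), IsAbelianHeap opH →
      ∀ (φ : A → H) (ψ : B → H),
        (∀ a b c : A, φ (opA a b c) = opH (φ a) (φ b) (φ c)) →
        (∀ a b c : B, ψ (opB a b c) = opH (ψ a) (ψ b) (ψ c)) →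
        ∃! ξ : C → H,
          (∀ x y z : C, ξ (opC x y z) = opH (ξ x) (ξ y) (ξ z)) ∧
          (∀ a : A, ξ (ιA a) = φ a) ∧ (∀ b : B, ξ (ιB b) = ψ b)) :
    Infinite C := by
  obtain ⟨a⟩ := hneA
  obtain ⟨b⟩ := hneB
  obtain ⟨ξ, ⟨h, h0, h1⟩, -⟩ := huniv ℤ (fun x y z => x - y + z)
    ⟨⟨fun a b c d e => by ring, fun a b => by ring, fun a b => by ring⟩, fun a b c => by ring⟩
    (fun _ => 0) (fun _ => 1) (by simp) (by simp)
  have key : ∀ n : ℕ, ξ ((fun x => opC x (ιA a) (ιB b))^[n] (ιA a)) = n := by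
    intro n
    induction n with
    | zero => simp [h0]
    | succ k ih =>
      rw [Function.iterate_succ_apply', h, ih, h0, h1]
      simp
  refine Infinite.of_injective
    (fun n : ℕ => (fun x => opC x (ιA a) (ιB b))^[n] (ιA a)) ?_
  intro m n hmn
  have hx := congrArg ξ hmn
  simp only [key] at hx
  exact_mod_cast hx
end

section
/- Let X be a finite set with n ≥ 1 elements and fix x₀ ∈ X. Let F be the free Abelian group ℤ^(X\{x₀}), regarded as a heap with [x,y,z] = x − y + z, and let ι : X → F send x₀ to 0 and each y ≠ x₀ to the corresponding standard basis element. Then (F, ι) is the free Abelian heap on X: for every Abelian heap H and every function φ : X → H there exists a unique heap morphism ψ : F → H with ψ ∘ ι = φ. In particular, the free Abelian heap on an n-element set is isomorphic to the heap H(ℤ^(n−1)). -/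
theorem heap_exists_group {H : Type} (op : H → H → H → H) (h : IsAbelianHeap op) (e : H) :
    ∃ G : AddCommGroup H, (0 : H) = e ∧ ∀ a b c : H, op a b c = a - b + c := by
  obtain ⟨⟨hassoc, hr, hl⟩, hc⟩ := h
  let G : AddCommGroup H :=
    { add := fun a b => op a e b
      zero := e
      neg := fun a => op e a e
      add_assoc := fun a b c => hassoc a e b e c
      zero_add := fun a => hl a e
      add_zero := fun a => hr a e
      nsmul := @nsmulRec H ⟨e⟩ ⟨fun a b => op a e b⟩
      zsmul := @zsmulRec H ⟨e⟩ ⟨fun a b => op a e b⟩ ⟨fun a => op e a e⟩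
        (@nsmulRec H ⟨e⟩ ⟨fun a b => op a e b⟩)
      neg_add_cancel := fun a => by
        change op (op e a e) e a = e
        rw [hassoc, hl, hr]
      add_comm := fun a b => hc a e b }
  refine ⟨G, rfl, fun a b c => ?_⟩
  rw [sub_eq_add_neg]
  change op a b c = op (op a e (op e b e)) e c
  rw [← hassoc a e e b e, hr, hassoc, hl]

/-- Let `X` be a finite set with `n ≥ 1` elements and fix
`x₀ ∈ X`.  Let `F = ℤ^(X\{x₀})`, regarded as a heap with `[x,y,z] = x - y + z`,
and let `ι : X → F` send `x₀` to `0` and each `y ≠ x₀` to the corresponding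
standard basis vector.  Then `(F, ι)` is the free Abelian heap on `X`, and in
particular the free Abelian heap on an `n`-element set is isomorphic to the
heap `H(ℤ^(n-1))`. -/
theorem free_abelian_heap {X : Type} [Fintype X] [DecidableEq X]
    (n : ℕ) (hn : 1 ≤ n) (hcard : Fintype.card X = n) (x₀ : X) :
    (∀ (H : Type) (op : H → H → H → H), IsAbelianHeap op →
      ∀ φ : X → H, ∃! ψ : ({y : X // y ≠ x₀} → ℤ) → H,
        (∀ a b c : {y : X // y ≠ x₀} → ℤ, ψ (a - b + c) = op (ψ a) (ψ b) (ψ c)) ∧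
        (∀ x : X, ψ (if h : x = x₀ then 0 else Pi.single ⟨x, h⟩ 1) = φ x)) ∧
    ∃ eqv : ({y : X // y ≠ x₀} → ℤ) ≃ (Fin (n - 1) → ℤ),
      ∀ a b c : {y : X // y ≠ x₀} → ℤ, eqv (a - b + c) = eqv a - eqv b + eqv c := by
  constructor
  · intro H op hop φ
    obtain ⟨G, h0, hG⟩ := heap_exists_group op hop (φ x₀)
    refine ⟨fun a => ∑ i, a i • φ i.1, ⟨fun a b c => ?_, fun x => ?_⟩, ?_⟩
    · rw [hG]
      simp only [Pi.add_apply, Pi.sub_apply, add_smul, sub_smul, Finset.sum_add_distrib,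
        Finset.sum_sub_distrib]
    · by_cases hx : x = x₀
      · subst hx
        simp [← h0]
      · simp only [hx, dite_false]
        rw [Finset.sum_eq_single ⟨x, hx⟩]
        · simp
        · intro b _ hb
          simp [Pi.single_eq_of_ne hb]
        · simp
    · rintro ψ ⟨h1, h2⟩
      have hz : ψ 0 = 0 := by
        have := h2 x₀
        simp only [dite_true] at this
        rw [this, h0]
      let f : ({y : X // y ≠ x₀} → ℤ) →+ H :=
        { toFun := ψ
          map_zero' := hz
          map_add' := fun a b => by
            have := h1 a 0 b
            rw [hG, hz] at this
            simpa using this }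
      funext a
      change f a = _
      conv_lhs => rw [← Finset.univ_sum_single a]
      rw [map_sum]
      refine Finset.sum_congr rfl fun i _ => ?_
      have h3 : (Pi.single i (a i) : {y : X // y ≠ x₀} → ℤ) = a i • Pi.single i 1 := by
        rw [← Pi.single_smul]; simp
      rw [h3, map_zsmul]
      congr 1
      have := h2 i.1
      rw [dif_neg i.2] at this
      exact this
  · have hc : Fintype.card {y : X // y ≠ x₀} = n - 1 := by
      rw [← hcard]; simp [Fintype.card_subtype_compl]
    let e := Fintype.equivFinOfCardEq hc
    exact ⟨Equiv.arrowCongr e (Equiv.refl ℤ), fun a b c => rfl⟩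
end

section
/- For every truss T there exist a unital truss U and an injective map j : T → U preserving the ternary operation and the multiplication (i.e., j([t,t',t'']) = [j(t), j(t'), j(t'')] and j(t t') = j(t) j(t')), such that the identity element 1 of U does not lie in the image of j and U is generated as a heap by j(T) ∪ {1}. -/
/-- A truss is an Abelian heap with an associative multiplication that
distributes over the ternary operation on both sides. -/
def IsTruss {T : Type*} (op : T → T → T → T) (mul : T → T → T) : Prop :=
  IsAbelianHeap op ∧
  (∀ a b c : T, mul (mul a b) c = mul a (mul b c)) ∧
  (∀ s a b c : T, mul s (op a b c) = op (mul s a) (mul s b) (mul s c)) ∧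
  (∀ s a b c : T, mul (op a b c) s = op (mul a s) (mul b s) (mul c s))


theorem trussAux {G : Type} [AddCommGroup G] (op : G → G → G → G) (mul : G → G → G)
    (hop : ∀ a b c, op a b c = a - b + c) (hT : IsTruss op mul) :
    ∃ (U : Type) (opU : U → U → U → U) (mulU : U → U → U) (one : U),
      IsTruss opU mulU ∧
      (∀ u : U, mulU one u = u ∧ mulU u one = u) ∧
      ∃ j : G → U, Function.Injective j ∧
        (∀ a b c : G, j (op a b c) = opU (j a) (j b) (j c)) ∧
        (∀ a b : G, j (mul a b) = mulU (j a) (j b)) ∧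
        one ∉ Set.range j ∧
        ∀ V : Set U, Set.range j ⊆ V → one ∈ V →
          (∀ a ∈ V, ∀ b ∈ V, ∀ c ∈ V, opU a b c ∈ V) → V = Set.univ := by
  obtain rfl : op = fun a b c => a - b + c := by
    funext a b c; exact hop a b c
  obtain ⟨-, hassoc, hl, hr⟩ := hT
  simp only at hl hr
  have hl2 : ∀ s a c, mul s (a + c) = mul s a - mul s 0 + mul s c := by
    intro s a c
    have := hl s a 0 c
    simpa using this
  have hr2 : ∀ s a c, mul (a + c) s = mul a s - mul 0 s + mul c s := by
    intro s a c
    have := hr s a 0 c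
    simpa using this
  obtain ⟨γ, hγ⟩ : ∃ γ, γ = mul 0 0 := ⟨_, rfl⟩
  obtain ⟨lam, hlam⟩ : ∃ f : G →+ G, ∀ a, f a = mul a 0 - mul 0 0 :=
    ⟨AddMonoidHom.mk' (fun a => mul a 0 - mul 0 0) (by
      intro a b; simp only [hr2]; abel), fun a => rfl⟩
  obtain ⟨rho, hrho⟩ : ∃ f : G →+ G, ∀ a, f a = mul 0 a - mul 0 0 :=
    ⟨AddMonoidHom.mk' (fun a => mul 0 a - mul 0 0) (by
      intro a b; simp only [hl2]; abel), fun a => rfl⟩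
  obtain ⟨β, hβ⟩ : ∃ f : G →+ G →+ G, ∀ a b, f a b = mul a b - mul a 0 - mul 0 b + mul 0 0 :=
    ⟨AddMonoidHom.mk' (fun a => AddMonoidHom.mk'
        (fun b => mul a b - mul a 0 - mul 0 b + mul 0 0) (by
          intro b c; simp only [hl2]; abel)) (by
      intro a b; ext c
      simp only [AddMonoidHom.mk'_apply, AddMonoidHom.add_apply, hr2]; abel), fun a b => rfl⟩
  have hmul : ∀ a b, mul a b = β a b + lam a + rho b + γ := by
    intro a b; rw [hβ, hlam, hrho, hγ]; abel
  clear hβ hlam hrho hγ hl hr hl2 hr2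
  simp only [hmul, map_add, AddMonoidHom.add_apply] at hassoc
  have c0 : lam γ = rho γ := by
    have := hassoc 0 0 0
    simpa using this
  have ca : ∀ a, lam (lam a) = β a γ + lam a := by
    intro a
    have := hassoc a 0 0
    simp [c0] at this
    exact this
  have cb : ∀ b, lam (rho b) = rho (lam b) := by
    intro b
    have := hassoc 0 b 0
    simpa [c0] using this
  have cc : ∀ c, β γ c = rho (rho c) - rho c := by
    intro c
    have := hassoc 0 0 c
    simp [c0] at this
    linear_combination (norm := module) this
  have cab : ∀ a b, lam (β a b) = β a (lam b) := by
    intro a b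
    have := hassoc a b 0
    simp [c0, ca, cb] at this
    linear_combination (norm := module) this
  have cac : ∀ a c, β (lam a) c = β a (rho c) := by
    intro a c
    have := hassoc a 0 c
    simp [c0, ca, cc] at this
    linear_combination (norm := module) this
  have cbc : ∀ b c, β (rho b) c = rho (β b c) := by
    intro b c
    have := hassoc 0 b c
    simp [c0, cb, cc] at this
    linear_combination (norm := module) this
  have cabc : ∀ a b c, β (β a b) c = β a (β b c) := by
    intro a b c
    have := hassoc a b c
    simp only [c0, ca, cb, cc, cab, cac, cbc] at this
    linear_combination (norm := module) this
  refine ⟨G × ℤ, fun x y z => x - y + z,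
    fun x y => (mul x.1 y.1 + y.2 • (x.1 - mul x.1 0) + x.2 • (y.1 - mul 0 y.1)
      + (x.2 * y.2) • mul 0 0, x.2 * y.2), (0, 1),
    ⟨⟨⟨?_, ?_, ?_⟩, ?_⟩, ?_, ?_, ?_⟩, ?_, fun t => (t, 0), ?_, ?_, ?_, ?_, ?_⟩
  · intros; dsimp only; abel
  · intros; dsimp only; abel
  · intros; dsimp only; abel
  · intros; dsimp only; abel
  · rintro ⟨a, k⟩ ⟨b, l⟩ ⟨c, m⟩
    refine Prod.ext ?_ (mul_assoc k l m)
    simp only [hmul, map_add, map_sub, map_zsmul, AddMonoidHom.add_apply, AddMonoidHom.sub_apply,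
      AddMonoidHom.coe_smul, Pi.smul_apply, map_zero, AddMonoidHom.zero_apply,
      c0, ca, cb, cc, cab, cac, cbc, cabc]
    module
  · rintro ⟨a, k⟩ ⟨b, l⟩ ⟨c, m⟩ ⟨d, n⟩
    refine Prod.ext ?_ ?_
    · simp only [hmul, Prod.fst_add, Prod.fst_sub, Prod.snd_add, Prod.snd_sub, map_add, map_sub,
        AddMonoidHom.add_apply, AddMonoidHom.sub_apply, map_zero, AddMonoidHom.zero_apply]
      module
    · simp only [Prod.snd_add, Prod.snd_sub]
      ring
  · rintro ⟨a, k⟩ ⟨b, l⟩ ⟨c, m⟩ ⟨d, n⟩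
    refine Prod.ext ?_ ?_
    · simp only [hmul, Prod.fst_add, Prod.fst_sub, Prod.snd_add, Prod.snd_sub, map_add, map_sub,
        AddMonoidHom.add_apply, AddMonoidHom.sub_apply, map_zero, AddMonoidHom.zero_apply]
      module
    · simp only [Prod.snd_add, Prod.snd_sub]
      ring
  · rintro ⟨a, k⟩
    constructor
    · refine Prod.ext ?_ (one_mul k)
      simp only
      module
    · refine Prod.ext ?_ (mul_one k)
      simp only
      module
  · intro a b h
    exact congrArg Prod.fst h
  · intro a b c
    simp
  · intro a b
    simp
  · rintro ⟨t, h⟩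
    simpa using congrArg Prod.snd h
  · intro V hj h1 hV
    have h0 : ∀ a, ((a, 0) : G × ℤ) ∈ V := fun a => hj ⟨a, rfl⟩
    refine Set.eq_univ_of_forall ?_
    rintro ⟨a, k⟩
    induction k using Int.induction_on with
    | zero => exact h0 a
    | succ i ih =>
      have := hV _ ih _ (h0 0) _ h1
      simpa using this
    | pred i ih =>
      have := hV _ ih _ h1 _ (h0 0)
      simpa using this

/-- Every truss `T` admits a unital extension: a unital truss
`U` with an injective map `j : T → U` preserving the ternary operation and the
multiplication, such that the identity `1` of `U` is not in the image of `j`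
and `U` is generated as a heap by `j(T) ∪ {1}`. -/
theorem truss_unital_extension {T : Type} (op : T → T → T → T) (mul : T → T → T)
    (hT : IsTruss op mul) :
    ∃ (U : Type) (opU : U → U → U → U) (mulU : U → U → U) (one : U),
      IsTruss opU mulU ∧
      (∀ u : U, mulU one u = u ∧ mulU u one = u) ∧
      ∃ j : T → U, Function.Injective j ∧
        (∀ a b c : T, j (op a b c) = opU (j a) (j b) (j c)) ∧
        (∀ a b : T, j (mul a b) = mulU (j a) (j b)) ∧
        one ∉ Set.range j ∧
        ∀ V : Set U, Set.range j ⊆ V → one ∈ V →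
          (∀ a ∈ V, ∀ b ∈ V, ∀ c ∈ V, opU a b c ∈ V) → V = Set.univ := by
  rcases isEmpty_or_nonempty T with hE | ⟨⟨e⟩⟩
  · refine ⟨Unit, fun _ _ _ => (), fun _ _ => (), (), ?_, fun _ => ⟨rfl, rfl⟩,
      fun _ => (), fun a => hE.elim a, fun a => hE.elim a, fun a => hE.elim a, ?_, ?_⟩
    · simp [IsTruss, IsAbelianHeap, IsHeap]
    · rintro ⟨t, -⟩
      exact hE.elim t
    · intro V _ h1 _
      exact Set.eq_univ_of_forall fun _ => h1
  · obtain ⟨⟨ha, h1, h2⟩, hc⟩ := hT.1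
    letI : Add T := ⟨fun a b => op a e b⟩
    letI : Zero T := ⟨e⟩
    letI : Neg T := ⟨fun b => op e b e⟩
    letI inst : AddCommGroup T :=
      { add_assoc := fun a b c => ha a e b e c
        zero_add := fun a => h2 a e
        add_zero := fun a => h1 a e
        nsmul := nsmulRec
        zsmul := zsmulRec
        neg_add_cancel := fun a => by
          change op (op e a e) e a = e
          rw [ha, h2, h1]
        add_comm := fun a b => hc a e b }
    refine trussAux op mul ?_ hT
    intro a b c
    rw [sub_eq_add_neg]
    change op a b c = op (op a e (op e b e)) e c
    rw [← ha a e e b e, h1, ha, h2]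
end

section
/- For every truss T there exist a unital ring R and an injective map f : T → R satisfying f([t,t',t'']) = f(t) − f(t') + f(t'') and f(t t') = f(t) f(t') for all t,t',t'' ∈ T. (That is, every truss embeds into the truss T(R) associated to some unital ring R.) -/
/-- The left multiplication by `s`, linearised at `0`. -/
def trussL {G : Type} [AddCommGroup G] (mul : G → G → G)
    (hl : ∀ s a b c : G, mul s (a - b + c) = mul s a - mul s b + mul s c) (s : G) : G →+ G :=
  AddMonoidHom.mk' (fun a => mul s a - mul s 0) (by
    intro a b
    have := hl s a 0 b
    simp only [sub_zero] at this
    rw [this]; abel)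

/-- The representation of the truss on the unital ring extension. -/
def trussF {G : Type} [AddCommGroup G] (mul : G → G → G)
    (hl : ∀ s a b c : G, mul s (a - b + c) = mul s a - mul s b + mul s c) (s : G) :
    AddMonoid.End (G × ℤ × ℤ) :=
  AddMonoidHom.mk' (fun x => (trussL mul hl s x.1 + x.2.1 • mul s 0 + x.2.2 • s,
      x.2.1 + x.2.2, 0)) (by
    intro a b
    ext
    · simp only [Prod.fst_add, Prod.snd_add, map_add, add_smul]; abel
    · simp only [Prod.fst_add, Prod.snd_add]; abel
    · simp)

theorem truss_aux {G : Type} [AddCommGroup G] (mul : G → G → G)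
    (ha : ∀ a b c : G, mul (mul a b) c = mul a (mul b c))
    (hl : ∀ s a b c : G, mul s (a - b + c) = mul s a - mul s b + mul s c)
    (hr : ∀ s a b c : G, mul (a - b + c) s = mul a s - mul b s + mul c s) :
    ∃ (R : Type) (_ : Ring R) (f : G → R), Function.Injective f ∧
      (∀ a b c : G, f (a - b + c) = f a - f b + f c) ∧
      (∀ a b : G, f (mul a b) = f a * f b) := by
  have hF : ∀ s x, trussF mul hl s x = (trussL mul hl s x.1 + x.2.1 • mul s 0 + x.2.2 • s,
      x.2.1 + x.2.2, 0) := fun _ _ => rfl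
  have hL : ∀ s x, trussL mul hl s x = mul s x - mul s 0 := fun _ _ => rfl
  refine ⟨AddMonoid.End (G × ℤ × ℤ), inferInstance, trussF mul hl, ?_, ?_, ?_⟩
  · intro s t h
    have h2 := congrArg (fun g : AddMonoid.End (G × ℤ × ℤ) => (g (0, 0, 1)).1) h
    simpa [hF] using h2
  · intro a b c
    refine AddMonoidHom.ext fun x => ?_
    change trussF mul hl (a - b + c) x = trussF mul hl a x - trussF mul hl b x + trussF mul hl c x
    simp only [hF]
    ext
    · simp only [Prod.fst_add, Prod.fst_sub, hL, hr, smul_add, smul_sub]; abel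
    · simp
    · simp
  · intro s t
    refine AddMonoidHom.ext fun x => ?_
    change trussF mul hl (mul s t) x = trussF mul hl s (trussF mul hl t x)
    simp only [hF]
    ext
    · simp only [map_add, map_zsmul, add_smul, zero_smul]
      rw [hL t, map_sub]
      simp only [hL, ha, smul_sub]; abel
    · simp
    · simp

/-- Every truss embeds into the truss associated to some
unital ring: there exist a unital ring `R` and an injective `f : T → R` with
`f([t,t',t'']) = f(t) - f(t') + f(t'')` and `f(t t') = f(t) f(t')`. -/
theorem truss_embeds_into_ring {T : Type} (op : T → T → T → T) (mul : T → T → T)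
    (hT : IsTruss op mul) :
    ∃ (R : Type) (_ : Ring R) (f : T → R), Function.Injective f ∧
      (∀ a b c : T, f (op a b c) = f a - f b + f c) ∧
      (∀ a b : T, f (mul a b) = f a * f b) := by
  obtain ⟨⟨⟨has, h1, h2⟩, hc⟩, ha, hl, hr⟩ := hT
  rcases isEmpty_or_nonempty T with hE | ⟨⟨e⟩⟩
  · exact ⟨ℤ, inferInstance, fun _ => 0, fun a => hE.elim a, fun a => hE.elim a,
      fun a => hE.elim a⟩
  · let _ : Zero T := ⟨e⟩
    let _ : Add T := ⟨fun a b => op a e b⟩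
    let _ : Neg T := ⟨fun a => op e a e⟩
    let _ : AddCommGroup T :=
      { add_assoc := fun a b c => has a e b e c
        zero_add := fun a => h2 a e
        add_zero := fun a => h1 a e
        neg_add_cancel := fun a => by
          change op (op e a e) e a = e
          rw [has, h2, h1]
        add_comm := fun a b => hc a e b
        nsmul := nsmulRec
        zsmul := zsmulRec }
    have hop : ∀ a b c : T, op a b c = a - b + c := by
      intro a b c
      rw [sub_eq_add_neg]
      change _ = op (op a e (op e b e)) e c
      rw [← has, h1, has, h2]
    simp only [hop] at hl hr ⊢
    exact truss_aux mul ha hl hr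
end

section
/- Let R be a unital ring and M a unital module over the truss T(R) possessing exactly one absorber e. Then M becomes a unital left R-module with addition a + b := [a, e, b], zero element e, negation −a := [e, a, e], and scalar multiplication the given action; moreover in this R-module [a,b,c] = a − b + c for all a,b,c ∈ M. -/
/-- `(M, op, sm)` is a unital module over the truss `T(R)` associated to the
ring `R`: `M` is an Abelian heap and the action `sm` satisfies
`r·(s·m) = (rs)·m`, `(r - s + t)·m = [r·m, s·m, t·m]`,
`r·[m,m',m''] = [r·m, r·m', r·m'']` and `1·m = m`. -/
def IsTRMod {R M : Type*} [Ring R] (op : M → M → M → M) (sm : R → M → M) : Prop :=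
  IsAbelianHeap op ∧
  (∀ (r s : R) (m : M), sm r (sm s m) = sm (r * s) m) ∧
  (∀ (r s t : R) (m : M), sm (r - s + t) m = op (sm r m) (sm s m) (sm t m)) ∧
  (∀ (r : R) (m m' m'' : M), sm r (op m m' m'') = op (sm r m) (sm r m') (sm r m'')) ∧
  (∀ m : M, sm (1 : R) m = m)

/-- Let `R` be a unital ring and `M` a unital module over the
truss `T(R)` with exactly one absorber `e`.  Then `M` becomes a unital left
`R`-module with `a + b = [a,e,b]`, zero `e`, `-a = [e,a,e]` and scalar action
the given one; moreover in this `R`-module `[a,b,c] = a - b + c`. -/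
theorem module_from_unique_absorber {R M : Type} [Ring R]
    (op : M → M → M → M) (sm : R → M → M) (hM : IsTRMod op sm) (e : M)
    (habs : ∀ r : R, sm r e = e)
    (huniq : ∀ e' : M, (∀ r : R, sm r e' = e') → e' = e) :
    ∃ (_ : AddCommGroup M) (_ : Module R M),
      (∀ a b : M, a + b = op a e b) ∧
      ((0 : M) = e) ∧
      (∀ a : M, -a = op e a e) ∧
      (∀ (r : R) (m : M), r • m = sm r m) ∧
      (∀ a b c : M, op a b c = a - b + c) := by
  obtain ⟨⟨⟨hassoc, hr, hl⟩, hcomm⟩, hmul, hadd, hop, hone⟩ := hM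
  have h0 : ∀ m : M, sm 0 m = e := fun m =>
    huniq _ (fun r => by rw [hmul, mul_zero])
  letI : Add M := ⟨fun a b => op a e b⟩
  letI : Zero M := ⟨e⟩
  letI : Neg M := ⟨fun a => op e a e⟩
  let G : AddCommGroup M :=
    { add_assoc := fun a b c => hassoc a e b e c
      zero_add := fun a => hl a e
      add_zero := fun a => hr a e
      add_comm := fun a b => hcomm a e b
      neg_add_cancel := fun a => by
        change op (op e a e) e a = e
        rw [hassoc, hl, hr]
      nsmul := nsmulRec
      zsmul := zsmulRec }
  let Mo : Module R M :=
    { smul := sm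
      one_smul := hone
      mul_smul := fun r s m => (hmul r s m).symm
      smul_zero := habs
      zero_smul := h0
      smul_add := fun r a b => by
        change sm r (op a e b) = op (sm r a) e (sm r b)
        rw [hop, habs]
      add_smul := fun r s m => by
        change sm (r + s) m = op (sm r m) e (sm s m)
        have h := hadd r 0 s m
        rwa [sub_zero, h0] at h }
  refine ⟨G, Mo, fun _ _ => rfl, rfl, fun _ => rfl, fun _ _ => rfl, fun a b c => ?_⟩
  rw [sub_eq_add_neg]
  change op a b c = op (op a e (op e b e)) e c
  rw [hassoc, hassoc, hl, ← hassoc, hr]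
end

section
/- Let R be a unital ring, X a nonempty set, and let (C, (ι_x)_{x∈X}) be a coproduct in the category of unital T(R)-modules of the family consisting of a copy of T(R) for each x ∈ X. Then for a unital left R-module N, the module T(N) is isomorphic to C as a T(R)-module if and only if X is a singleton and N is isomorphic to R as a left R-module. In particular, if X has at least two elements, then C is not isomorphic to T(N) for any R-module N. -/
/-- A morphism of modules over the truss `T(R)`: a map preserving both the
ternary heap operation and the `R`-action. -/
def IsTRModHom {R M N : Type*} [Ring R] (opM : M → M → M → M) (smM : R → M → M)
    (opN : N → N → N → N) (smN : R → N → N) (f : M → N) : Prop :=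
  (∀ a b c : M, f (opM a b c) = opN (f a) (f b) (f c)) ∧
  (∀ (r : R) (m : M), f (smM r m) = smN r (f m))

/-- Let `R` be a unital ring, `X` a nonempty set and
`(C, (ι_x)_{x∈X})` a coproduct in the category of unital `T(R)`-modules of an
`X`-indexed family of copies of `T(R)` (here `T(R)` is the `T(R)`-module `R`
with `[a,b,c] = a - b + c` and action `r·a = ra`).  Then for a unital left
`R`-module `N`, the `T(R)`-module `T(N)` is isomorphic to `C` if and only if
`X` is a singleton and `N ≅ R` as left `R`-modules. -/
theorem free_truss_module_iso_TN_iff {R : Type} [Ring R] {X : Type}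
    (hX : Nonempty X) {C : Type} (opC : C → C → C → C) (smC : R → C → C)
    (hC : IsTRMod opC smC) (ι : X → R → C)
    (hι : ∀ x : X, IsTRModHom (fun a b c : R => a - b + c)
      (fun r a : R => r * a) opC smC (ι x))
    (huniv : ∀ (H : Type) (opH : H → H → H → H) (smH : R → H → H),
      IsTRMod opH smH → ∀ φ : X → R → H,
        (∀ x : X, IsTRModHom (fun a b c : R => a - b + c)
          (fun r a : R => r * a) opH smH (φ x)) →
        ∃! ξ : C → H, IsTRModHom opC smC opH smH ξ ∧ ∀ x : X, ξ ∘ ι x = φ x)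
    (N : Type) [AddCommGroup N] [Module R N] :
    (∃ f : N → C, Function.Bijective f ∧
        IsTRModHom (fun x y z : N => x - y + z) (fun (r : R) (x : N) => r • x)
          opC smC f) ↔
      (Subsingleton X ∧ Nonempty (N ≃ₗ[R] R)) := by
  obtain ⟨x0⟩ := hX
  have key : Subsingleton X → ∃ ξ : C → R, IsTRModHom opC smC (fun a b c : R => a - b + c)
      (fun r a : R => r * a) ξ ∧ (∀ r, ξ (ι x0 r) = r) ∧ ∀ c, ι x0 (ξ c) = c := by
    intro hs
    have hR : IsTRMod (fun a b c : R => a - b + c) (fun r a : R => r * a) := by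
      refine ⟨⟨⟨?_, ?_, ?_⟩, ?_⟩, ?_, ?_, ?_, ?_⟩ <;> intros <;> simp only [] <;>
        first | noncomm_ring | simp
    obtain ⟨ξ, ⟨h1, h2⟩, -⟩ := huniv R _ _ hR (fun _ r => r)
      (fun _ => ⟨fun _ _ _ => rfl, fun _ _ => rfl⟩)
    obtain ⟨η, -, h4⟩ := huniv C _ _ hC ι hι
    refine ⟨ξ, h1, fun r => congrFun (h2 x0) r, fun c => ?_⟩
    have ha := h4 (fun c => ι x0 (ξ c)) ⟨⟨fun a b c => by
        show ι x0 (ξ _) = _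
        rw [h1.1]; exact (hι x0).1 _ _ _, fun r m => by
        show ι x0 (ξ _) = _
        rw [h1.2]; exact (hι x0).2 _ _⟩, fun x => by
        funext r
        have := congrFun (h2 x) r
        simp only [Function.comp] at this ⊢
        rw [this, Subsingleton.elim x0 x]⟩
    have hb := h4 (fun c => c) ⟨⟨fun _ _ _ => rfl, fun _ _ => rfl⟩, fun x => rfl⟩
    exact congrFun (ha.trans hb.symm) c
  constructor
  · rintro ⟨f, hf, hf1, hf2⟩
    have hs : Subsingleton X := by
      refine ⟨fun x y => ?_⟩
      by_contra hxy
      have h0 : ∀ z, ι z 0 = f 0 := by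
        intro z
        obtain ⟨n, hn⟩ := hf.2 (ι z 0)
        have h := (hι z).2 0 0
        simp only [mul_zero] at h
        rw [h, ← hn, ← hf2]
        simp
      have hZ : IsTRMod (fun a b c : ℤ => a - b + c) (fun (_ : R) (a : ℤ) => a) := by
        refine ⟨⟨⟨?_, ?_, ?_⟩, ?_⟩, ?_, ?_, ?_, ?_⟩ <;> intros <;> simp only [] <;> ring
      classical
      obtain ⟨ξ, ⟨-, h2⟩, -⟩ := huniv ℤ _ _ hZ (fun z _ => if z = x then 0 else 1)
        (fun z => ⟨fun _ _ _ => by simp, fun _ _ => rfl⟩)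
      have hx := congrFun (h2 x) 0
      have hy := congrFun (h2 y) 0
      simp only [Function.comp, h0] at hx hy
      rw [hx] at hy
      simp [Ne.symm hxy] at hy
    refine ⟨hs, ?_⟩
    obtain ⟨ξ, h1, h2, h3⟩ := key hs
    have g2 : ∀ (r : R) (n : N), ξ (f (r • n)) = r * ξ (f n) := by
      intro r n
      rw [hf2, h1.2]
    have g0 : ξ (f 0) = 0 := by
      have := g2 0 0
      simpa using this
    have g1 : ∀ a b : N, ξ (f (a + b)) = ξ (f a) + ξ (f b) := by
      intro a b
      have := hf1 a 0 b
      simp only [sub_zero] at this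
      rw [this, h1.1]
      simp [g0]
    have hξ : Function.Bijective ξ := Function.bijective_iff_has_inverse.2 ⟨ι x0, h3, h2⟩
    exact ⟨LinearEquiv.ofBijective
      { toFun := fun n => ξ (f n), map_add' := g1, map_smul' := g2 } (hξ.comp hf)⟩
  · rintro ⟨hs, ⟨e⟩⟩
    obtain ⟨ξ, h1, h2, h3⟩ := key hs
    have hi : Function.Bijective (ι x0) := Function.bijective_iff_has_inverse.2 ⟨ξ, h2, h3⟩
    refine ⟨fun n => ι x0 (e n), hi.comp e.bijective, fun a b c => ?_, fun r m => ?_⟩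
    · simp only [map_add, map_sub]
      exact (hι x0).1 _ _ _
    · simp only [map_smul]
      exact (hι x0).2 _ _
end

section
/- Let R be a unital ring, n ≥ 1, and let (C, (ι_i)_{i∈{1,…,n}}) be a coproduct in the category of unital T(R)-modules of n copies of T(R). Then: (i) the set Abs(C) of absorbers of C is a nonempty sub-heap of C, and for any a ∈ Abs(C) the retract group G(Abs(C); a) is isomorphic to ℤ^(n−1); (ii) the quotient heap C/Abs(C), with zero element the class Abs(C), addition [x̄, Abs(C), ȳ], and the induced R-action, is a unital left R-module isomorphic to the free R-module R^n. -/
/-- The set of absorbers of a module over the truss `T(R)`. -/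
def absSet {R M : Type*} [Ring R] (sm : R → M → M) : Set M :=
  {e : M | ∀ r : R, sm r e = e}

@[reducible] def retractGroup {H : Type} (op : H → H → H → H) (h : IsAbelianHeap op) (e : H) :
    AddCommGroup H where
  add a b := op a e b
  zero := e
  neg a := op e a e
  add_assoc a b c := h.1.1 _ _ _ _ _
  zero_add a := h.1.2.2 _ _
  add_zero a := h.1.2.1 _ _
  neg_add_cancel a := by
    change op (op e a e) e a = e
    rw [h.1.1, h.1.2.2, h.1.2.1]
  add_comm a b := h.2 _ _ _
  nsmul := @nsmulRec H ⟨e⟩ ⟨fun a b => op a e b⟩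
  zsmul := @zsmulRec H ⟨e⟩ ⟨fun a b => op a e b⟩ ⟨fun a => op e a e⟩
    (@nsmulRec H ⟨e⟩ ⟨fun a b => op a e b⟩)

theorem retract_op {H : Type} (op : H → H → H → H) (h : IsAbelianHeap op) (e : H) (a b c : H) :
    letI := retractGroup op h e
    op a b c = a - b + c := by
  letI := retractGroup op h e
  rw [sub_eq_add_neg]
  change op a b c = op (op a e (op e b e)) e c
  rw [← h.1.1, h.1.2.1, h.1.1, h.1.2.2]

abbrev DMod (R : Type) (m : ℕ) := (Fin (m+1) → R) × (Fin m → ℤ)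

def dIota (R : Type) [Ring R] (m : ℕ) (i : Fin (m+1)) (r : R) : DMod R m :=
  (Pi.single i r, Fin.cases (motive := fun _ => Fin m → ℤ) 0 (fun j => Pi.single j 1) i)

theorem dMod_isTRMod (R : Type) [Ring R] (m : ℕ) :
    IsTRMod (fun a b c : DMod R m => a - b + c) (fun (r : R) a => (r • a.1, a.2)) := by
  refine ⟨⟨⟨?_, ?_, ?_⟩, ?_⟩, ?_, ?_, ?_, ?_⟩
  · intro a b c d e
    change a - b + c - d + e = a - b + (c - d + e)
    abel
  · intros; simp
  · intros; simp
  · intros; abel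
  · intro r s x; simp [mul_smul]
  · intro r s t x; ext <;> simp [add_mul, sub_mul]
  · intro r x y z; ext <;> simp [mul_add, mul_sub]
  · intro x; simp

theorem dIota_hom (R : Type) [Ring R] (m : ℕ) (i : Fin (m+1)) :
    IsTRModHom (fun a b c : R => a - b + c) (fun r a : R => r * a)
      (fun a b c : DMod R m => a - b + c) (fun (r : R) a => (r • a.1, a.2)) (dIota R m i) := by
  refine ⟨fun a b c => ?_, fun r a => ?_⟩
  · simp [dIota, Pi.single_sub, Pi.single_add]
  · simp [dIota, ← Pi.single_smul]

theorem exists_equiv {R : Type} [Ring R]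
    (m : ℕ) {C : Type} (opC : C → C → C → C) (smC : R → C → C)
    (hC : IsTRMod opC smC) (ι : Fin (m+1) → R → C)
    (hι : ∀ i, IsTRModHom (fun a b c : R => a - b + c)
      (fun r a : R => r * a) opC smC (ι i))
    (huniv : ∀ (H : Type) (opH : H → H → H → H) (smH : R → H → H),
      IsTRMod opH smH → ∀ φ : Fin (m+1) → R → H,
        (∀ i, IsTRModHom (fun a b c : R => a - b + c)
          (fun r a : R => r * a) opH smH (φ i)) →
        ∃! ξ : C → H, IsTRModHom opC smC opH smH ξ ∧ ∀ i, ξ ∘ ι i = φ i) :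
    ∃ ξ : C → DMod R m, Function.Bijective ξ ∧
      (∀ a b c, ξ (opC a b c) = ξ a - ξ b + ξ c) ∧ 
      (∀ r a, ξ (smC r a) = (r • (ξ a).1, (ξ a).2)) := by
  obtain ⟨ξ, ⟨hξ, hξι⟩, -⟩ := huniv _ _ _ (dMod_isTRMod R m) _ (dIota_hom R m)
  letI : AddCommGroup C := retractGroup opC hC.1 (ι 0 0)
  have h0 : (0 : C) = ι 0 0 := rfl
  have hop : ∀ a b c, opC a b c = a - b + c := retract_op opC hC.1 (ι 0 0)
  have hsm0 : ∀ i r, smC r (ι i 0) = ι i 0 := by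
    intro i r
    have := (hι i).2 r 0
    simpa using this.symm
  have hξ1 : ∀ a b c : C, ξ (a - b + c) = ξ a - ξ b + ξ c := by
    intro a b c; rw [← hop]; exact hξ.1 a b c
  have hξ0 : ξ 0 = 0 := by
    rw [h0, show ξ (ι 0 0) = _ from congrFun (hξι 0) 0]
    simp [dIota]
  let ξ' : C →+ DMod R m :=
    { toFun := ξ, map_zero' := hξ0
      map_add' := fun a b => by simpa [hξ0] using hξ1 a 0 b }
  have hsm1 : ∀ r (a b c : C), smC r (a - b + c) = smC r a - smC r b + smC r c := by
    intro r a b c; rw [← hop, ← hop]; exact hC.2.2.2.1 r a b c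
  have hsmz : ∀ r, smC r 0 = 0 := fun r => hsm0 0 r
  let σ : R → C →+ C := fun r =>
    { toFun := smC r, map_zero' := hsmz r
      map_add' := fun a b => by simpa [hsmz] using hsm1 r a 0 b }
  have hσ : ∀ r a, smC r a = σ r a := fun _ _ => rfl
  have hι1 : ∀ i a b c, ι i (a - b + c) = ι i a - ι i b + ι i c := by
    intro i a b c; rw [← hop]; exact (hι i).1 a b c
  let κ : Fin (m+1) → R →+ C := fun i =>
    { toFun := fun r => ι i r - ι i 0, map_zero' := by simp
      map_add' := fun a b => by
        have := hι1 i a 0 b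
        rw [sub_zero] at this
        rw [this]; abel }
  have hκ : ∀ i r, κ i r = ι i r - ι i 0 := fun _ _ => rfl
  let η : DMod R m →+ C :=
    { toFun := fun x => ∑ i, κ i (x.1 i) + ∑ j : Fin m, x.2 j • ι j.succ 0
      map_zero' := by simp
      map_add' := fun x y => by
        simp [Finset.sum_add_distrib, add_smul]; abel }
  have hη : ∀ x, η x = ∑ i, κ i (x.1 i) + ∑ j : Fin m, x.2 j • ι j.succ 0 := fun _ => rfl
  have hησ : ∀ r (x : DMod R m), η (r • x.1, x.2) = smC r (η x) := by
    intro r x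
    rw [hσ, hη, hη, map_add, map_sum, map_sum]
    congr 1
    · refine Finset.sum_congr rfl fun i _ => ?_
      rw [hκ, hκ, map_sub, ← hσ, ← hσ, hsm0, ← (hι i).2]; rfl
    · refine Finset.sum_congr rfl fun i _ => ?_
      rw [map_zsmul, ← hσ, hsm0]
  have hηι : ∀ i r, η (dIota R m i r) = ι i r := by
    intro i r
    rw [hη]
    have h1 : ∑ k, κ k ((dIota R m i r).1 k) = κ i r := by
      rw [Finset.sum_eq_single i]
      · simp [dIota]
      · intro b _ hb; simp [dIota, hb]
      · simp
    rw [h1, hκ]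
    refine Fin.cases ?_ (fun j => ?_) i
    · simp [dIota, ← h0]
    · have : ∑ k : Fin m, (dIota R m j.succ r).2 k • ι k.succ 0 = ι j.succ 0 := by
        rw [Finset.sum_eq_single j]
        · simp [dIota]
        · intro b _ hb; simp [dIota, hb]
        · simp
      rw [this]; abel
  have hleft : ∀ c, η (ξ c) = c := by
    have hu := huniv C opC smC hC ι hι
    have := hu.unique (y₁ := fun c => η (ξ c)) (y₂ := id)
      ⟨⟨fun a b c => ?_, fun r a => ?_⟩, fun i => ?_⟩
      ⟨⟨fun a b c => rfl, fun r a => rfl⟩, fun i => rfl⟩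
    · exact fun c => congrFun this c
    · simp only [hop, hξ1, map_add, map_sub]
    · simp only [hξ.2, hησ]
    · funext r
      have := congrFun (hξι i) r
      simp only [Function.comp] at this ⊢
      rw [this, hηι]
  have hξι' : ∀ i r, ξ' (ι i r) = dIota R m i r := fun i r => congrFun (hξι i) r
  have hright : ∀ x, ξ' (η x) = x := by
    intro x
    rw [hη, map_add, map_sum, map_sum]
    simp only [hκ, map_sub, map_zsmul, hξι']
    ext k
    · simp [dIota, Finset.sum_apply, Prod.fst_sum, Pi.single_apply]
    · simp [dIota, Finset.sum_apply, Prod.snd_sum, Pi.single_apply]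
  exact ⟨ξ, ⟨Function.LeftInverse.injective hleft, Function.RightInverse.surjective hright⟩,
    hξ.1, hξ.2⟩

/-- Let `R` be a unital ring, `n ≥ 1`, and `(C, (ι_i))` a
coproduct in the category of unital `T(R)`-modules of `n` copies of `T(R)`.
Then: (i) the set `Abs(C)` of absorbers of `C` is a nonempty sub-heap of `C`
whose retract group at any `a ∈ Abs(C)` is isomorphic to `ℤ^(n-1)`;
(ii) the quotient heap `C/Abs(C)`, with zero the class `Abs(C)`, addition
`[x̄, Abs(C), ȳ]` and the induced `R`-action, is a unital left `R`-module
isomorphic to the free `R`-module `R^n`. -/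
theorem free_truss_module_absorbers_and_quotient {R : Type} [Ring R]
    (n : ℕ) (hn : 1 ≤ n) {C : Type} (opC : C → C → C → C) (smC : R → C → C)
    (hC : IsTRMod opC smC) (ι : Fin n → R → C)
    (hι : ∀ i : Fin n, IsTRModHom (fun a b c : R => a - b + c)
      (fun r a : R => r * a) opC smC (ι i))
    (huniv : ∀ (H : Type) (opH : H → H → H → H) (smH : R → H → H),
      IsTRMod opH smH → ∀ φ : Fin n → R → H,
        (∀ i : Fin n, IsTRModHom (fun a b c : R => a - b + c)
          (fun r a : R => r * a) opH smH (φ i)) →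
        ∃! ξ : C → H, IsTRModHom opC smC opH smH ξ ∧ ∀ i : Fin n, ξ ∘ ι i = φ i) :
    -- (i) the absorbers form a nonempty sub-heap with retract group `ℤ^(n-1)`
    ((absSet smC).Nonempty ∧
      (∀ a ∈ absSet smC, ∀ b ∈ absSet smC, ∀ c ∈ absSet smC,
        opC a b c ∈ absSet smC) ∧
      (∀ a : C, ∀ ha : a ∈ absSet smC,
        ∃ φ : absSet smC → (Fin (n - 1) → ℤ), Function.Bijective φ ∧
          ∀ (s t : absSet smC) (h : opC (s : C) a (t : C) ∈ absSet smC),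
            φ ⟨opC (s : C) a (t : C), h⟩ = φ s + φ t)) ∧
    -- (ii) the quotient by the absorbers is a free `R`-module of rank `n`
    (∀ st : Setoid C,
      (∀ x y : C, st.r x y ↔ ∃ s ∈ absSet smC, opC x y s ∈ absSet smC) →
      ∃ (_ : AddCommGroup (Quotient st)) (_ : Module R (Quotient st)),
        (∀ s ∈ absSet smC, (0 : Quotient st) = Quotient.mk st s) ∧
        (∀ x y : C, ∀ s ∈ absSet smC,
          Quotient.mk st x + Quotient.mk st y = Quotient.mk st (opC x s y)) ∧
        (∀ (r : R) (x : C),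
          r • Quotient.mk st x = Quotient.mk st (smC r x)) ∧
        Nonempty (Quotient st ≃ₗ[R] (Fin n → R))) := by
  obtain ⟨m, rfl⟩ : ∃ m, n = m + 1 := ⟨n - 1, by omega⟩
  obtain ⟨ξ, hbij, hop, hsm⟩ := exists_equiv m opC smC hC ι hι huniv
  have habs : ∀ x, x ∈ absSet smC ↔ (ξ x).1 = 0 := by
    intro x
    constructor
    · intro h
      have := congrArg ξ (h 0)
      rw [hsm] at this
      rw [← this]; simp
    · intro h r
      apply hbij.1
      rw [hsm, h, smul_zero, ← h]
  have hclosed : ∀ a ∈ absSet smC, ∀ b ∈ absSet smC, ∀ c ∈ absSet smC,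
        opC a b c ∈ absSet smC := by
    intro a ha b hb c hc
    rw [habs] at *
    simp [hop, ha, hb, hc]
  have hne : (absSet smC).Nonempty := by
    obtain ⟨x, hx⟩ := hbij.2 0
    exact ⟨x, by rw [habs, hx]; rfl⟩
  refine ⟨⟨hne, hclosed, ?_⟩, ?_⟩
  · intro a ha
    refine ⟨fun s => (ξ s).2 - (ξ a).2, ⟨?_, ?_⟩, ?_⟩
    · intro s t h
      have h2 : (ξ s).2 = (ξ t).2 := by simpa using h
      apply Subtype.ext
      apply hbij.1
      exact Prod.ext (((habs _).1 s.2).trans ((habs _).1 t.2).symm) h2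
    · intro (k : Fin m → ℤ)
      obtain ⟨x, hx⟩ := hbij.2 (0, k + (ξ a).2)
      exact ⟨⟨x, by rw [habs, hx]⟩, by simp [hx]⟩
    · intro s t h
      simp only [hop, Prod.snd_add, Prod.snd_sub]
      abel
  · intro st hst
    have hrel : ∀ x y, st.r x y ↔ (ξ x).1 = (ξ y).1 := by
      intro x y
      rw [hst]
      constructor
      · rintro ⟨s, hs, h⟩
        rw [habs] at hs h
        simpa [hop, hs, sub_eq_zero] using h
      · intro h
        obtain ⟨s, hs⟩ := hne
        refine ⟨s, hs, ?_⟩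
        rw [habs] at *
        simp [hop, hs, h]
    let f : Quotient st → (Fin (m+1) → R) :=
      Quotient.lift (fun x => (ξ x).1) (fun x y h => (hrel x y).1 h)
    have hf : ∀ x, f (Quotient.mk st x) = (ξ x).1 := fun _ => rfl
    have hfb : Function.Bijective f := by
      constructor
      · intro x y
        refine Quotient.inductionOn₂ x y fun x y h => ?_
        exact Quotient.sound ((hrel x y).2 h)
      · intro v
        obtain ⟨x, hx⟩ := hbij.2 (v, 0)
        exact ⟨Quotient.mk st x, by rw [hf, hx]⟩
    let E : Quotient st ≃ (Fin (m+1) → R) := Equiv.ofBijective f hfb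
    letI i1 : AddCommGroup (Quotient st) := E.addCommGroup
    letI i2 : Module R (Quotient st) := E.module R
    let L : Quotient st ≃ₗ[R] (Fin (m+1) → R) := E.linearEquiv R
    have hL : ∀ x, L (Quotient.mk st x) = (ξ x).1 := fun _ => rfl
    refine ⟨i1, i2, ?_, ?_, ?_, ⟨L⟩⟩
    · intro s hs
      apply L.injective
      rw [map_zero, hL, (habs s).1 hs]
    · intro x y s hs
      apply L.injective
      rw [map_add, hL, hL, hL, hop]
      simp [(habs s).1 hs]
    · intro r x
      apply L.injective
      rw [map_smul, hL, hL, hsm]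
end
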